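/- Let H be an m×n complex matrix, let S be a subset of its row indices and T a subset of its column indices, and let H' = H[S, T] be the submatrix of H with rows in S and columns in T. Then for every real ρ ≥ 0, det(I_{|S|} + ρ·H'·H'ᴴ) ≤ det(I_m + ρ·H·Hᴴ). -/

import Mathlib

open Matrix

/-!
For invertible `A ≥ 0`, the Weinstein–Aronszajn identity gives
`det (A + Cᴴ C) = det A * det (1 + C A⁻¹ Cᴴ)`, and the second factor is at least `1` because the
eigenvalues of `1 + C A⁻¹ Cᴴ` are. Hence the determinant is monotone for the Loewner order on
positive semidefinite matrices. Now `H Hᴴ` is the sum of the positive semidefinite rank-one matrices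
`h hᴴ` over the columns `h` of `H`, so deleting columns decreases it in this order. Since
`det (1 + ρ H Hᴴ) = det (1 + ρ Hᴴ H)`, deleting rows of `H` amounts to deleting columns of `Hᴴ`.
-/

section Ring

variable {m n R : Type*} [Fintype n]

theorem mul_eq_sum_vecMulVec_col_row [NonUnitalNonAssocSemiring R] {l : Type*}
    (A : Matrix m n R) (B : Matrix n l R) :
    A * B = ∑ j, vecMulVec (A.col j) (B.row j) := by
  ext i k
  simp [Matrix.mul_apply, Matrix.sum_apply, vecMulVec_apply]

theorem det_one_add_smul_mul_comm [CommRing R] [Fintype m] [DecidableEq m] [DecidableEq n]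
    (c : R) (A : Matrix m n R) (B : Matrix n m R) :
    (1 + c • (A * B)).det = (1 + c • (B * A)).det := by
  rw [← Matrix.smul_mul, det_one_add_mul_comm, Matrix.mul_smul]

end Ring

section RCLike

open scoped ComplexOrder MatrixOrder

variable {𝕜 m m' n n' : Type*} [RCLike 𝕜]

theorem det_one_add_eq_prod_one_add_eigenvalues [Fintype n] [DecidableEq n] {A : Matrix n n 𝕜}
    (hA : A.IsHermitian) : (1 + A).det = ∏ i, (1 + (hA.eigenvalues i : 𝕜)) := by
  conv_lhs => rw [hA.spectral_theorem, Unitary.conjStarAlgAut_apply, det_one_add_mul_comm,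
    ← mul_assoc, Unitary.coe_star_mul_self, one_mul, ← diagonal_one, diagonal_add, det_diagonal]
  simp only [Function.comp_apply]

theorem one_le_det_one_add_of_posSemidef [Fintype n] [DecidableEq n] {A : Matrix n n 𝕜}
    (hA : A.PosSemidef) : 1 ≤ (1 + A).det := by
  rw [det_one_add_eq_prod_one_add_eigenvalues hA.isHermitian]
  exact Finset.one_le_prod fun i _ ↦
    le_add_of_nonneg_right (RCLike.ofReal_nonneg.mpr (hA.eigenvalues_nonneg i))

theorem det_le_det_of_posSemidef_of_le [Fintype n] [DecidableEq n] {A B : Matrix n n 𝕜}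
    (hA : A.PosSemidef) (hAB : A ≤ B) : A.det ≤ B.det := by
  by_cases hdet : A.det = 0
  · rw [hdet]
    exact (hA.nonneg.trans hAB).posSemidef.det_nonneg
  obtain ⟨C, hC⟩ := CStarAlgebra.nonneg_iff_eq_star_mul_self.mp (sub_nonneg.mpr hAB)
  have hCAC : (C * A⁻¹ * Cᴴ).PosSemidef := hA.inv.mul_mul_conjTranspose_same C
  calc A.det ≤ A.det * (1 + C * A⁻¹ * Cᴴ).det :=
        le_mul_of_one_le_right hA.det_nonneg (one_le_det_one_add_of_posSemidef hCAC)
    _ = (A + Cᴴ * C).det := (det_add_mul Cᴴ C (isUnit_iff_ne_zero.mpr hdet)).symm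
    _ = B.det := by rw [← star_eq_conjTranspose, ← hC, add_sub_cancel]

theorem submatrix_cols_mul_conjTranspose_le [Finite m] [Fintype n] [Fintype n']
    (A : Matrix m n 𝕜) {g : n' → n} (hg : g.Injective) :
    A.submatrix id g * (A.submatrix id g)ᴴ ≤ A * Aᴴ := by
  let outer (j : n) : Matrix m m 𝕜 := vecMulVec (A.col j) (star (A.col j))
  have outer_nonneg (j : n) : 0 ≤ outer j := (posSemidef_vecMulVec_self_star _).nonneg
  calc A.submatrix id g * (A.submatrix id g)ᴴ
    _ = ∑ j, outer (g j) := mul_eq_sum_vecMulVec_col_row _ _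
    _ = ∑ j ∈ Finset.univ.map ⟨g, hg⟩, outer j := (Finset.sum_map _ ⟨g, hg⟩ outer).symm
    _ ≤ ∑ j, outer j := Finset.sum_le_univ_sum_of_nonneg outer_nonneg
    _ = A * Aᴴ := (mul_eq_sum_vecMulVec_col_row _ _).symm

variable [Fintype m] [DecidableEq m] [Fintype m'] [DecidableEq m'] [Fintype n] [Fintype n'] {ρ : 𝕜}

theorem det_one_add_smul_submatrix_cols_mul_conjTranspose_le
    (A : Matrix m n 𝕜) {g : n' → n} (hg : g.Injective) (hρ : 0 ≤ ρ) :
    (1 + ρ • (A.submatrix id g * (A.submatrix id g)ᴴ)).det ≤ (1 + ρ • (A * Aᴴ)).det := by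
  refine det_le_det_of_posSemidef_of_le
    (PosSemidef.one.add ((posSemidef_self_mul_conjTranspose _).smul hρ)) ?_
  gcongr
  exact submatrix_cols_mul_conjTranspose_le A hg

theorem det_one_add_smul_submatrix_rows_mul_conjTranspose_le
    (A : Matrix m n 𝕜) {f : m' → m} (hf : f.Injective) (hρ : 0 ≤ ρ) :
    (1 + ρ • (A.submatrix f id * (A.submatrix f id)ᴴ)).det ≤ (1 + ρ • (A * Aᴴ)).det := by
  classical
  rw [det_one_add_smul_mul_comm, det_one_add_smul_mul_comm ρ A]
  simpa only [conjTranspose_submatrix, conjTranspose_conjTranspose] using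
    det_one_add_smul_submatrix_cols_mul_conjTranspose_le Aᴴ hf hρ

theorem det_one_add_smul_submatrix_mul_conjTranspose_le_general
    (A : Matrix m n 𝕜) {f : m' → m} (hf : f.Injective) {g : n' → n} (hg : g.Injective)
    (hρ : 0 ≤ ρ) :
    (1 + ρ • (A.submatrix f g * (A.submatrix f g)ᴴ)).det ≤ (1 + ρ • (A * Aᴴ)).det :=
  (det_one_add_smul_submatrix_cols_mul_conjTranspose_le (A.submatrix f id) hg hρ).trans
    (det_one_add_smul_submatrix_rows_mul_conjTranspose_le A hf hρ)

end RCLike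

/-- Dropping rows and columns can only decrease the Gaussian mutual information:
for an `m×n` complex matrix `H`, a set `S` of row indices and a set `T` of column indices,
the submatrix `H' = H[S,T]` satisfies `det(I + ρ·H'·H'ᴴ) ≤ det(I + ρ·H·Hᴴ)` for all `ρ ≥ 0`. -/
theorem det_one_add_smul_submatrix_mul_conjTranspose_le
    (m n : ℕ) (H : Matrix (Fin m) (Fin n) ℂ)
    (S : Finset (Fin m)) (T : Finset (Fin n)) (ρ : ℝ) (hρ : 0 ≤ ρ) :
    (((1 : Matrix {i // i ∈ S} {i // i ∈ S} ℂ)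
        + (ρ : ℂ) • (H.submatrix (fun i : {i // i ∈ S} => (i : Fin m))
              (fun j : {j // j ∈ T} => (j : Fin n))
          * (H.submatrix (fun i : {i // i ∈ S} => (i : Fin m))
              (fun j : {j // j ∈ T} => (j : Fin n)))ᴴ)).det).re
      ≤ (((1 : Matrix (Fin m) (Fin m) ℂ) + (ρ : ℂ) • (H * Hᴴ)).det).re := by
  exact (Complex.le_def.mp <| det_one_add_smul_submatrix_mul_conjTranspose_le_general H
    Subtype.val_injective Subtype.val_injective (Complex.zero_le_real.mpr hρ)).1
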